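/- Assume π(x) = li(x) + O(x·exp(−C·(log x)^{3/5}·(log log x)^{−1/5})) for some C > 0. Then for every fixed integer m ≥ 2 there exists an absolute constant A (independent of m) such that ∑_{2 ≤ n ≤ x} 1/π(n) = (1/2)·log² x − log x − log log x + A + k_2/log x + k_3/(2·log² x) + ... + k_m/((m−1)·log^{m−1} x) + O(1/log^m x) as x → ∞, where the k_j are defined by k_j + 1!·k_{j-1} + ... + (j−1)!·k_1 = j·j!. -/

import Mathlib

open Filter Real

noncomputable def li (x : ℝ) : ℝ := ∫ t in (2:ℝ)..x, 1 / Real.log t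

noncomputable def primePi (x : ℝ) : ℝ := Nat.primeCounting ⌊x⌋₊

noncomputable def pntDelta (x : ℝ) : ℝ :=
  (Real.log x) ^ ((3:ℝ)/5) * (Real.log (Real.log x)) ^ (-(1:ℝ)/5)

/-!
Integration by parts gives `li x` the asymptotic expansion `∑ i! x / log^{i+1} x`, and the error in
the prime number theorem is smaller than every term of it. The recurrence for `k` says that
`1 - X - ∑_{j ≥ 1} k_j X^{j+1}` is the formal inverse of `∑ i! Xⁱ`, so `1 / π(x)` has the expansion
`log x / x * (1 - u - ∑ k_j u^{j+1})` in `u = 1 / log x`. As `t ↦ 1 / π(t)` is constant between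
integers, the sum differs from `∫₂ˣ dt / π(t)` by at most its last term, and the expansion may be
integrated termwise: the first three terms give `½ log² x - log x - log log x`, the others
`k_j / ((j-1) log^{j-1} x)`. The truncation error at any order is integrable at infinity; its total
integral goes into the constant `A`, its tail is the error term. Two truncations differ by `o(1)`,
which is why `A` is the same for all `m`.
-/

open Asymptotics MeasureTheory Set
open scoped Topology PowerSeries

section AsymptoticExpansion

variable {α 𝕜 : Type*} [NormedField 𝕜] {f u : α → 𝕜} {l : Filter α} {p q : 𝕜⟦X⟧}

/-- Poincaré asymptotic expansion of `f` along `l` in powers of the gauge `u`. The coefficients are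
packed into a formal power series, so that algebra of expansions becomes algebra of series. -/
def HasAsymptoticExpansion (f u : α → 𝕜) (l : Filter α) (p : 𝕜⟦X⟧) : Prop :=
  ∀ N, (fun x => f x - (p.trunc N).eval (u x)) =O[l] fun x => u x ^ N

theorem X_pow_dvd_trunc_mul_trunc_sub_one {R : Type*} [CommRing R] {p q : R⟦X⟧} (h : p * q = 1)
    (N : ℕ) : Polynomial.X ^ N ∣ p.trunc N * q.trunc N - 1 := by
  refine Polynomial.X_pow_dvd_iff.2 fun d hd => ?_
  rw [Polynomial.coeff_sub, ← Polynomial.coeff_coe, Polynomial.coe_mul,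
    ← PowerSeries.coeff_mul_eq_coeff_trunc_mul_trunc p q hd, h, PowerSeries.coeff_one,
    Polynomial.coeff_one, sub_self]

theorem isBigO_one_eval_of_tendsto_zero (P : Polynomial 𝕜) (hu : Tendsto u l (𝓝 0)) :
    (fun x => P.eval (u x)) =O[l] fun _ => (1 : 𝕜) :=
  ((P.continuous.tendsto 0).comp hu).isBigO_one 𝕜

namespace HasAsymptoticExpansion

theorem tendsto (hf : HasAsymptoticExpansion f u l p) (hu : Tendsto u l (𝓝 0)) :
    Tendsto f l (𝓝 p.constantCoeff) := by
  have h := (hf 1).trans_tendsto (by simpa using hu)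
  simpa [PowerSeries.trunc_one_left] using h.add_const p.constantCoeff

theorem inv (hf : HasAsymptoticExpansion f u l p) (hu : Tendsto u l (𝓝 0)) (hpq : p * q = 1) :
    HasAsymptoticExpansion (fun x => (f x)⁻¹) u l q := by
  intro N
  have hp : p.constantCoeff ≠ 0 :=
    left_ne_zero_of_mul_eq_one (by simpa using congrArg PowerSeries.constantCoeff hpq)
  have hlim := hf.tendsto hu
  obtain ⟨R, hR⟩ := X_pow_dvd_trunc_mul_trunc_sub_one hpq N
  have htrunc : (fun x => (p.trunc N).eval (u x) * (q.trunc N).eval (u x) - 1)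
      =O[l] fun x => u x ^ N := by
    refine ((isBigO_refl (fun x => u x ^ N) l).mul
      (isBigO_one_eval_of_tendsto_zero R hu)).congr (fun x => ?_) fun _ => mul_one _
    simpa using congrArg (Polynomial.eval (u x)) hR.symm
  have hprod : (fun x => f x * (q.trunc N).eval (u x) - 1) =O[l] fun x => u x ^ N := by
    refine (((hf N).mul (isBigO_one_eval_of_tendsto_zero (q.trunc N) hu)).congr_right
      fun _ => mul_one _).add htrunc |>.congr_left fun x => ?_
    ring
  refine (hprod.mul (((hlim.inv₀ hp).neg).isBigO_one 𝕜)).congr' ?_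
    (Eventually.of_forall fun _ => mul_one _)
  filter_upwards [hlim.eventually_ne hp] with x hx
  field_simp
  ring

end HasAsymptoticExpansion

end AsymptoticExpansion

section DerivativeComparison

variable {E : Type*} [NormedAddCommGroup E] {g g' : ℝ → ℝ} {h : ℝ → E} {a L : ℝ}

theorem integrableOn_Ioi_of_isBigO_hasDerivAt (hloc : LocallyIntegrableOn h (Ici a))
    (hg : ∀ᶠ x in atTop, HasDerivAt g (g' x) x) (hg' : ∀ᶠ x in atTop, 0 ≤ g' x)
    (hlim : Tendsto g atTop (𝓝 L)) (hO : h =O[atTop] g') : IntegrableOn h (Ioi a) := by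
  obtain ⟨b, hb⟩ := eventually_atTop.1 (hg.and hg')
  have hint : IntegrableOn g' (Ioi b) :=
    integrableOn_Ioi_deriv_of_nonneg' (fun x hx => (hb x hx).1) (fun x hx => (hb x hx.le).2) hlim
  exact (hloc.integrableOn_of_isBigO_atTop hO ⟨Ioi b, Ioi_mem_atTop b, hint⟩).mono_set
    Ioi_subset_Ici_self

variable [NormedSpace ℝ E]

theorem isBigO_of_isBigO_hasDerivAt {f f' : ℝ → E}
    (hf : ∀ᶠ x in atTop, HasDerivAt f (f' x) x) (hg : ∀ᶠ x in atTop, HasDerivAt g (g' x) x)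
    (hg' : ∀ᶠ x in atTop, 0 ≤ g' x) (hlim : Tendsto g atTop atTop) (h : f' =O[atTop] g') :
    f =O[atTop] g := by
  obtain ⟨c, hbound⟩ := h.bound
  obtain ⟨a, ha⟩ := eventually_atTop.1 (hf.and (hg.and (hg'.and hbound)))
  have hmvt : ∀ x, a ≤ x → ‖f x‖ ≤ c * (g x - g a) + ‖f a‖ := by
    intro x hx
    have hB : ∀ y, a ≤ y → HasDerivAt (fun y => c * (g y - g a) + ‖f a‖) (c * g' y) y :=
      fun y hy => (((ha y hy).2.1.sub_const _).const_mul c).add_const _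
    refine image_norm_le_of_norm_deriv_right_le_deriv_boundary' (f' := f')
      (fun y hy => (ha y hy.1).1.continuousAt.continuousWithinAt)
      (fun y hy => (ha y hy.1).1.hasDerivWithinAt) (by simp)
      (fun y hy => (hB y hy.1).continuousAt.continuousWithinAt)
      (fun y hy => (hB y hy.1).hasDerivWithinAt) (fun y hy => ?_) (right_mem_Icc.2 hx)
    obtain ⟨-, -, hg'y, hfy⟩ := ha y hy.1
    rwa [Real.norm_of_nonneg hg'y] at hfy
  refine IsBigO.of_bound (c + 1) ?_
  filter_upwards [eventually_ge_atTop a, hlim.eventually_ge_atTop (‖f a‖ - c * g a),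
    hlim.eventually_ge_atTop 0] with x hx hgx hgx0
  rw [Real.norm_of_nonneg hgx0]
  linarith [hmvt x hx]

theorem integral_Ioi_isBigO_of_isBigO_hasDerivAt
    (hg : ∀ᶠ x in atTop, HasDerivAt g (g' x) x) (hg' : ∀ᶠ x in atTop, 0 ≤ g' x)
    (hlim : Tendsto g atTop (𝓝 L)) (hO : h =O[atTop] g') :
    (fun x => ∫ t in Ioi x, h t) =O[atTop] fun x => L - g x := by
  obtain ⟨c, hc, hbound⟩ := hO.exists_nonneg
  obtain ⟨b, hb⟩ := eventually_atTop.1 (hg.and (hg'.and hbound.bound))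
  refine IsBigO.of_bound c ?_
  filter_upwards [eventually_ge_atTop b] with x hx
  have hderiv : ∀ t ∈ Ici x, HasDerivAt g (g' t) t := fun t ht => (hb t (hx.trans ht)).1
  have hnonneg : ∀ t ∈ Ioi x, 0 ≤ g' t := fun t ht => (hb t (hx.trans (le_of_lt ht))).2.1
  calc ‖∫ t in Ioi x, h t‖ ≤ ∫ t in Ioi x, c * g' t := by
        refine norm_integral_le_of_norm_le
          ((integrableOn_Ioi_deriv_of_nonneg' hderiv hnonneg hlim).const_mul c)
          ((ae_restrict_iff' measurableSet_Ioi).2 (Eventually.of_forall fun t ht => ?_))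
        have hht := (hb t (hx.trans (le_of_lt ht))).2.2
        rwa [Real.norm_of_nonneg (hnonneg t ht)] at hht
    _ = c * (L - g x) := by
        rw [integral_const_mul, integral_Ioi_of_hasDerivAt_of_nonneg' hderiv hnonneg hlim]
    _ ≤ c * ‖L - g x‖ := by gcongr; exact le_norm_self _

end DerivativeComparison

theorem exists_forall_sub_const_isBigO {ι α E : Type*} [NormedAddCommGroup E] {l : Filter α}
    [l.NeBot] {F : ι → α → E} {g : ι → α → ℝ} (hg : ∀ i, Tendsto (g i) l (𝓝 0))
    (hF : ∀ i, ∃ A, (fun x => F i x - A) =O[l] g i)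
    (hsub : ∀ i j, Tendsto (fun x => F i x - F j x) l (𝓝 0)) :
    ∃ A, ∀ i, (fun x => F i x - A) =O[l] g i := by
  rcases isEmpty_or_nonempty ι with _ | ⟨⟨i₀⟩⟩
  · exact ⟨0, isEmptyElim⟩
  choose A hA using hF
  have hlim : ∀ i, Tendsto (F i) l (𝓝 (A i)) := fun i =>
    tendsto_sub_nhds_zero_iff.1 ((hA i).trans_tendsto (hg i))
  have hconst : ∀ i, A i = A i₀ := fun i =>
    sub_eq_zero.1 (tendsto_nhds_unique ((hlim i).sub (hlim i₀)) (hsub i i₀))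
  exact ⟨A i₀, fun i => hconst i ▸ hA i⟩

section FloorIntegral

variable {E : Type*} [NormedAddCommGroup E] (b : ℕ → E)

theorem locallyIntegrable_comp_floor : LocallyIntegrable (fun t : ℝ => b ⌊t⌋₊) := by
  intro x
  refine ⟨Ioo (x - 1) (⌊x⌋₊ + 1), Ioo_mem_nhds (by linarith) (Nat.lt_floor_add_one x), ?_⟩
  refine Measure.integrableOn_of_bounded (M := ∑ i ∈ Finset.range (⌊x⌋₊ + 1), ‖b i‖) (by simp)
    ?_ ((ae_restrict_iff' measurableSet_Ioo).2 (Eventually.of_forall fun t ht => ?_))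
  · exact ((StronglyMeasurable.of_discrete (f := b)).comp_measurable
      Nat.measurable_floor).aestronglyMeasurable
  · have hfloor : ⌊t⌋₊ < ⌊x⌋₊ + 1 :=
      (Nat.floor_lt' (Nat.succ_ne_zero _)).2 (by exact_mod_cast ht.2)
    exact Finset.single_le_sum (f := fun i => ‖b i‖) (fun i _ => norm_nonneg _)
      (Finset.mem_range.2 hfloor)

variable [NormedSpace ℝ E] [CompleteSpace E]

theorem integral_comp_floor_of_le {n : ℕ} {s t : ℝ} (hns : n ≤ s) (hst : s ≤ t) (htn : t ≤ n + 1) :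
    ∫ y in s..t, b ⌊y⌋₊ = (t - s) • b n := by
  rw [intervalIntegral.integral_congr_Ioo_of_le (g := fun _ => b n) hst fun y hy => ?_,
    intervalIntegral.integral_const]
  rw [(Nat.floor_eq_iff (n.cast_nonneg.trans (hns.trans hy.1.le))).2
    ⟨hns.trans hy.1.le, hy.2.trans_le htn⟩]

theorem sum_Icc_floor_eq_integral_add {m : ℕ} {x : ℝ} (hx : m ≤ x) :
    ∑ i ∈ Finset.Icc m ⌊x⌋₊, b i = (∫ t in m..x, b ⌊t⌋₊) + (⌊x⌋₊ + 1 - x) • b ⌊x⌋₊ := by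
  have hint : ∀ s t : ℝ, IntervalIntegrable (fun t : ℝ => b ⌊t⌋₊) volume s t := fun s t =>
    ((locallyIntegrable_comp_floor b).integrableOn_isCompact isCompact_uIcc).intervalIntegrable
  have hm : m ≤ ⌊x⌋₊ + 1 := (Nat.le_floor hx).trans (Nat.le_succ _)
  calc ∑ i ∈ Finset.Icc m ⌊x⌋₊, b i
      = ∑ i ∈ Finset.Ico m (⌊x⌋₊ + 1), ∫ t in (i : ℝ)..(i + 1 : ℕ), b ⌊t⌋₊ := by
        refine Finset.sum_congr rfl fun i _ => ?_
        rw [integral_comp_floor_of_le b le_rfl (by simp) (by simp)]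
        simp
    _ = ∫ t in (m : ℝ)..(⌊x⌋₊ + 1 : ℕ), b ⌊t⌋₊ :=
        intervalIntegral.sum_integral_adjacent_intervals_Ico (a := fun i : ℕ => (i : ℝ)) hm
          fun _ _ => hint _ _
    _ = (∫ t in m..x, b ⌊t⌋₊) + ∫ t in x..(⌊x⌋₊ + 1 : ℕ), b ⌊t⌋₊ :=
        (intervalIntegral.integral_add_adjacent_intervals (hint _ _) (hint _ _)).symm
    _ = _ := by
        rw [integral_comp_floor_of_le b (Nat.floor_le (m.cast_nonneg.trans hx))
          (by exact_mod_cast (Nat.lt_floor_add_one x).le) (by simp), Nat.cast_succ]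

theorem sum_Icc_floor_sub_integral_isBigO (m : ℕ) :
    (fun x : ℝ => ∑ i ∈ Finset.Icc m ⌊x⌋₊, b i - ∫ t in m..x, b ⌊t⌋₊)
      =O[atTop] fun x => b ⌊x⌋₊ := by
  refine IsBigO.of_bound 1 ?_
  filter_upwards [eventually_ge_atTop (m : ℝ)] with x hx
  have hfloor : (⌊x⌋₊ : ℝ) ≤ x := Nat.floor_le (m.cast_nonneg.trans hx)
  rw [sum_Icc_floor_eq_integral_add b hx, add_sub_cancel_left, norm_smul, Real.norm_of_nonneg
    (sub_nonneg.2 (Nat.lt_floor_add_one x).le)]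
  gcongr
  linarith

end FloorIntegral

section LogExpansions

theorem tendsto_inv_log_atTop : Tendsto (fun x : ℝ => (log x)⁻¹) atTop (𝓝 0) :=
  tendsto_log_atTop.inv_tendsto_atTop

theorem tendsto_div_log_pow_atTop (n : ℕ) :
    Tendsto (fun x : ℝ => x / log x ^ n) atTop atTop := by
  have h0 := (isLittleO_pow_log_id_atTop (n := n)).tendsto_div_nhds_zero
  have hpos : ∀ᶠ x : ℝ in atTop, log x ^ n / id x ∈ Ioi 0 := by
    filter_upwards [eventually_gt_atTop 1] with x hx
    exact div_pos (pow_pos (log_pos hx) n) (one_pos.trans hx)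
  exact (tendsto_nhdsWithin_iff.2 ⟨h0, hpos⟩).inv_tendsto_nhdsGT_zero.congr fun x => inv_div _ _

theorem isBigO_log_div_one_div_log_pow (n : ℕ) :
    (fun x : ℝ => log x / x) =O[atTop] fun x => 1 / log x ^ n := by
  refine ((isLittleO_pow_log_id_atTop (n := n + 1)).isBigO.mul
    (isBigO_refl (fun x : ℝ => (x * log x ^ n)⁻¹) atTop)).congr' ?_ ?_
  all_goals
    filter_upwards [eventually_gt_atTop 1] with x hx
    have hlog := (log_pos hx).ne'
    have hx0 : x ≠ 0 := by positivity
  · field_simp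
    ring
  · rw [id]
    field_simp

theorem hasDerivAt_div_log_pow (n : ℕ) {x : ℝ} (hx : 1 < x) :
    HasDerivAt (fun x : ℝ => x / log x ^ n) (1 / log x ^ n - n / log x ^ (n + 1)) x := by
  have hlog := log_pos hx
  have hx0 : x ≠ 0 := by positivity
  refine ((hasDerivAt_id x).fun_div ((hasDerivAt_log hx0).fun_pow n)
    (pow_ne_zero n hlog.ne')).congr_deriv ?_
  rcases n with _ | n
  · simp
  · simp only [id, Nat.add_sub_cancel]
    field_simp
    ring

theorem one_div_log_pow_isEquivalent (n : ℕ) :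
    (fun x : ℝ => 1 / log x ^ n - n / log x ^ (n + 1)) ~[atTop] fun x => 1 / log x ^ n := by
  have hsmall := (isBigO_refl (fun x : ℝ => (n : ℝ) / log x ^ n) atTop).mul_isLittleO
    ((isLittleO_one_iff ℝ).2 tendsto_inv_log_atTop)
  have hn : (fun x : ℝ => (n : ℝ) / log x ^ n) =O[atTop] fun x => 1 / log x ^ n :=
    (isBigO_const_mul_self (n : ℝ) (fun x : ℝ => 1 / log x ^ n) atTop).congr_left fun x =>
      mul_one_div _ _
  refine IsLittleO.congr_left (((hsmall.congr_right fun _ => mul_one _).trans_isBigO hn).neg_left)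
    fun x => ?_
  simp only [Pi.sub_apply, pow_succ]
  ring

theorem hasDerivAt_sum_factorial_mul_div_log_pow (N : ℕ) {x : ℝ} (hx : 1 < x) :
    HasDerivAt (fun x => ∑ i ∈ Finset.range N, (i.factorial : ℝ) * (x / log x ^ (i + 1)))
      (1 / log x - N.factorial / log x ^ (N + 1)) x := by
  refine (HasDerivAt.fun_sum fun i _ =>
    (hasDerivAt_div_log_pow (i + 1) hx).const_mul (i.factorial : ℝ)).congr_deriv ?_
  have htelescope : ∀ i : ℕ, (i.factorial : ℝ) *
      (1 / log x ^ (i + 1) - (i + 1 : ℕ) / log x ^ (i + 1 + 1)) =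
        i.factorial / log x ^ (i + 1) - (i + 1).factorial / log x ^ (i + 1 + 1) := by
    intro i
    rw [Nat.factorial_succ]
    push_cast
    ring
  simp_rw [htelescope]
  rw [Finset.sum_range_sub' (fun i => (i.factorial : ℝ) / log x ^ (i + 1))]
  simp

theorem hasDerivAt_li {x : ℝ} (hx : 1 < x) : HasDerivAt li (1 / log x) x := by
  have hcont : ContinuousOn (fun t => 1 / log t) (Ioi 1) := fun t ht =>
    (continuousAt_const.div (continuousAt_log (one_pos.trans ht).ne')
      (log_pos ht).ne').continuousWithinAt
  refine intervalIntegral.integral_hasDerivAt_right ?_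
    (hcont.stronglyMeasurableAtFilter isOpen_Ioi x hx) (hcont.continuousAt (Ioi_mem_nhds hx))
  exact (hcont.mono fun t ht => (lt_min one_lt_two hx).trans_le ht.1).intervalIntegrable

theorem li_sub_sum_factorial_isBigO (N : ℕ) :
    (fun x => li x - ∑ i ∈ Finset.range N, (i.factorial : ℝ) * (x / log x ^ (i + 1)))
      =O[atTop] fun x => x / log x ^ (N + 1) := by
  have hequiv := one_div_log_pow_isEquivalent (N + 1)
  have hone : ∀ᶠ x : ℝ in atTop, 1 < x := eventually_gt_atTop 1
  refine isBigO_of_isBigO_hasDerivAt (f' := fun x => N.factorial / log x ^ (N + 1))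
    (hone.mono fun x hx => ?_) (hone.mono fun x => hasDerivAt_div_log_pow (N + 1)) ?_
    (tendsto_div_log_pow_atTop (N + 1)) ?_
  · refine ((hasDerivAt_li hx).fun_sub
      (hasDerivAt_sum_factorial_mul_div_log_pow N hx)).congr_deriv ?_
    ring
  · filter_upwards [tendsto_log_atTop.eventually_ge_atTop ((N + 1 : ℕ) : ℝ), hone] with x hx hx1
    have hlog := log_pos hx1
    rw [sub_nonneg, pow_succ _ (N + 1), ← div_div, div_right_comm]
    gcongr
    exact (div_le_one hlog).2 hx
  · refine IsBigO.trans ?_ hequiv.isBigO_symm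
    exact (isBigO_const_mul_self (N.factorial : ℝ) (fun x : ℝ => 1 / log x ^ (N + 1))
      atTop).congr_left fun x => mul_one_div _ _

theorem hasAsymptoticExpansion_of_sub_li_isBigO {f : ℝ → ℝ}
    (hf : ∀ N : ℕ, (fun x => f x - li x) =O[atTop] fun x => x / log x ^ N) :
    HasAsymptoticExpansion (fun x => log x / x * f x) (fun x => (log x)⁻¹) atTop
      (PowerSeries.mk fun i => (i.factorial : ℝ)) := by
  intro N
  refine ((isBigO_refl (fun x : ℝ => log x / x) atTop).mul
    ((hf (N + 1)).add (li_sub_sum_factorial_isBigO N))).congr' ?_ ?_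
  all_goals
    filter_upwards [eventually_gt_atTop 1] with x hx
    have hlog := (log_pos hx).ne'
    have hx0 : x ≠ 0 := by positivity
  · rw [sub_add_sub_cancel, mul_sub, Finset.mul_sum, Polynomial.eval,
      PowerSeries.eval₂_trunc_eq_sum_range]
    congr 1
    refine Finset.sum_congr rfl fun i _ => ?_
    rw [PowerSeries.coeff_mk, RingHom.id_apply, inv_pow]
    field_simp
    ring
  · rw [inv_pow]
    field_simp
    ring

end LogExpansions

section IntegratedExpansion

theorem hasDerivAt_neg_inv_log_pow (n : ℕ) {x : ℝ} (hx : 1 < x) :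
    HasDerivAt (fun x : ℝ => -((n + 1) * log x ^ (n + 1))⁻¹) (x * log x ^ (n + 2))⁻¹ x := by
  have hlog := log_pos hx
  have hx0 : x ≠ 0 := by positivity
  refine ((((hasDerivAt_log hx0).fun_pow (n + 1)).const_mul (n + 1 : ℝ)).fun_inv
    (by positivity)).fun_neg.congr_deriv ?_
  push_cast [Nat.add_sub_cancel]
  field_simp
  ring

theorem tendsto_const_div_mul_log_pow_atTop (c : ℝ) (n : ℕ) :
    Tendsto (fun x => c / ((n + 1) * log x ^ (n + 1))) atTop (𝓝 0) :=
  (((tendsto_pow_atTop n.succ_ne_zero).comp tendsto_log_atTop).const_mul_atTop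
    n.cast_add_one_pos).const_div_atTop c

theorem tendsto_neg_inv_mul_log_pow_atTop (n : ℕ) :
    Tendsto (fun x : ℝ => -((n + 1) * log x ^ (n + 1))⁻¹) atTop (𝓝 0) := by
  simpa only [neg_div, one_div] using tendsto_const_div_mul_log_pow_atTop (-1) n

theorem eventually_inv_mul_log_pow_nonneg (n : ℕ) :
    ∀ᶠ x : ℝ in atTop, 0 ≤ (x * log x ^ n)⁻¹ := by
  filter_upwards [eventually_gt_atTop 1] with x hx
  have hlog := log_pos hx
  positivity

theorem integrableOn_Ioi_of_isBigO_inv_mul_log_pow {E : Type*} [NormedAddCommGroup E] {h : ℝ → E}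
    {a : ℝ} {n : ℕ} (hloc : LocallyIntegrableOn h (Ici a))
    (hO : h =O[atTop] fun x => (x * log x ^ (n + 2))⁻¹) : IntegrableOn h (Ioi a) :=
  integrableOn_Ioi_of_isBigO_hasDerivAt hloc
    ((eventually_gt_atTop 1).mono fun _ => hasDerivAt_neg_inv_log_pow n)
    (eventually_inv_mul_log_pow_nonneg (n + 2)) (tendsto_neg_inv_mul_log_pow_atTop n) hO

theorem integral_Ioi_isBigO_one_div_log_pow {E : Type*} [NormedAddCommGroup E] [NormedSpace ℝ E]
    {h : ℝ → E} {n : ℕ} (hO : h =O[atTop] fun x => (x * log x ^ (n + 2))⁻¹) :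
    (fun x => ∫ t in Ioi x, h t) =O[atTop] fun x => 1 / log x ^ (n + 1) := by
  refine (integral_Ioi_isBigO_of_isBigO_hasDerivAt
    ((eventually_gt_atTop 1).mono fun _ => hasDerivAt_neg_inv_log_pow n)
    (eventually_inv_mul_log_pow_nonneg (n + 2)) (tendsto_neg_inv_mul_log_pow_atTop n) hO).trans ?_
  refine (isBigO_const_mul_self ((n + 1 : ℝ)⁻¹) (fun x => 1 / log x ^ (n + 1)) atTop).congr_left
    fun x => ?_
  rw [zero_sub, neg_neg, mul_inv, one_div]

theorem log_div_mul_inv_log_pow {x : ℝ} (hx : log x ≠ 0) (n : ℕ) :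
    log x / x * (log x)⁻¹ ^ (n + 1) = (x * log x ^ n)⁻¹ := by
  rw [pow_succ', inv_pow, mul_inv, div_mul_eq_mul_div, mul_inv_cancel_left₀ hx, div_eq_inv_mul]

/-- The termwise primitive of the truncation `∑_{i < n + 3} cᵢ / (x log^{i-1} x)`: the expansion of
`∫ f` up to order `1 / log^{n+1} x`, without its constant term, when `x f(x) / log x` has expansion
`c` in powers of `1 / log x`. -/
noncomputable def logSeriesPrimitive (c : ℝ⟦X⟧) (n : ℕ) (x : ℝ) : ℝ :=
  c.coeff 0 / 2 * log x ^ 2 + c.coeff 1 * log x + c.coeff 2 * log (log x) -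
    ∑ i ∈ Finset.range n, c.coeff (i + 3) / ((i + 1) * log x ^ (i + 1))

theorem hasDerivAt_logSeriesPrimitive (c : ℝ⟦X⟧) (n : ℕ) {x : ℝ} (hx : 1 < x) :
    HasDerivAt (logSeriesPrimitive c n) (log x / x * (c.trunc (n + 3)).eval (log x)⁻¹) x := by
  have hlog := (log_pos hx).ne'
  have hx0 : x ≠ 0 := by positivity
  have hl := hasDerivAt_log hx0
  set S : ℝ := ∑ i ∈ Finset.range n, c.coeff (i + 3) * (log x)⁻¹ ^ (i + 3) with hS
  have htail : HasDerivAt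
      (fun x => ∑ i ∈ Finset.range n, c.coeff (i + 3) / ((i + 1) * log x ^ (i + 1)))
      (-(log x / x * S)) x := by
    rw [hS, Finset.mul_sum, ← Finset.sum_neg_distrib]
    refine HasDerivAt.fun_sum fun i _ => ?_
    rw [mul_left_comm, log_div_mul_inv_log_pow hlog]
    simpa [div_eq_mul_inv] using (hasDerivAt_neg_inv_log_pow i hx).const_mul (-c.coeff (i + 3))
  refine (((((hl.fun_pow 2).const_mul _).fun_add (hl.const_mul _)).fun_add
    ((hl.log hlog).const_mul _)).fun_sub htail).congr_deriv ?_
  have heval : (c.trunc (n + 3)).eval (log x)⁻¹ =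
      S + c.coeff 2 * (log x)⁻¹ ^ 2 + c.coeff 1 * (log x)⁻¹ + c.coeff 0 := by
    rw [Polynomial.eval, PowerSeries.eval₂_trunc_eq_sum_range, Finset.sum_range_succ',
      Finset.sum_range_succ', Finset.sum_range_succ']
    simp [S]
  rw [heval]
  field_simp
  ring

theorem tendsto_logSeriesPrimitive_sub (c : ℝ⟦X⟧) (m n : ℕ) :
    Tendsto (fun x => logSeriesPrimitive c m x - logSeriesPrimitive c n x) atTop (𝓝 0) := by
  have htail : ∀ m : ℕ, Tendsto
      (fun x => ∑ i ∈ Finset.range m, c.coeff (i + 3) / ((i + 1) * log x ^ (i + 1))) atTop (𝓝 0) :=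
    fun m => by
      simpa using tendsto_finsetSum (Finset.range m) fun i _ =>
        tendsto_const_div_mul_log_pow_atTop (c.coeff (i + 3)) i
  simpa [logSeriesPrimitive] using (htail n).sub (htail m)

theorem continuousOn_log_div_mul_eval_inv_log (P : Polynomial ℝ) :
    ContinuousOn (fun x => log x / x * P.eval (log x)⁻¹) (Ioi 1) := by
  have h0 : ∀ x ∈ Ioi (1 : ℝ), x ≠ 0 := fun x hx => (one_pos.trans hx).ne'
  have hlog : ContinuousOn log (Ioi 1) := continuousOn_log.mono h0
  exact (hlog.div continuousOn_id h0).mul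
    (P.continuous.comp_continuousOn (hlog.inv₀ fun x hx => (log_pos hx).ne'))

theorem integral_log_div_mul_eval_inv_log (c : ℝ⟦X⟧) (n : ℕ) {a b : ℝ} (ha : 1 < a) (hb : 1 < b) :
    ∫ x in a..b, log x / x * (c.trunc (n + 3)).eval (log x)⁻¹ =
      logSeriesPrimitive c n b - logSeriesPrimitive c n a := by
  have hab : uIcc a b ⊆ Ioi 1 := fun x hx => (lt_min ha hb).trans_le hx.1
  exact intervalIntegral.integral_eq_sub_of_hasDerivAt
    (fun x hx => hasDerivAt_logSeriesPrimitive c n (hab hx))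
    ((continuousOn_log_div_mul_eval_inv_log _).mono hab).intervalIntegrable

variable {f : ℝ → ℝ} {c : ℝ⟦X⟧} {a : ℝ}

theorem HasAsymptoticExpansion.sub_log_div_mul_eval_isBigO
    (hc : HasAsymptoticExpansion (fun x => x / log x * f x) (fun x => (log x)⁻¹) atTop c) (N : ℕ) :
    (fun x => f x - log x / x * (c.trunc N).eval (log x)⁻¹)
      =O[atTop] fun x => log x / x * (log x)⁻¹ ^ N := by
  refine ((isBigO_refl (fun x : ℝ => log x / x) atTop).mul (hc N)).congr' ?_ EventuallyEq.rfl
  filter_upwards [eventually_gt_atTop 1] with x hx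
  have hlog := (log_pos hx).ne'
  have hx0 : x ≠ 0 := by positivity
  field_simp

theorem exists_integral_sub_isBigO (ha : 1 < a) (hf : LocallyIntegrableOn f (Ici a))
    (hc : HasAsymptoticExpansion (fun x => x / log x * f x) (fun x => (log x)⁻¹) atTop c) (n : ℕ) :
    ∃ A, (fun x => (∫ t in a..x, f t) - logSeriesPrimitive c n x - A)
      =O[atTop] fun x => 1 / log x ^ (n + 1) := by
  set φ : ℝ → ℝ := fun x => log x / x * (c.trunc (n + 3)).eval (log x)⁻¹
  have hφ : LocallyIntegrableOn φ (Ici a) := ((continuousOn_log_div_mul_eval_inv_log _).mono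
    (Ici_subset_Ioi.2 ha)).locallyIntegrableOn measurableSet_Ici
  have hO : (fun x => f x - φ x) =O[atTop] fun x => (x * log x ^ (n + 2))⁻¹ := by
    refine (hc.sub_log_div_mul_eval_isBigO (n + 3)).congr' EventuallyEq.rfl ?_
    filter_upwards [eventually_gt_atTop 1] with x hx
    exact log_div_mul_inv_log_pow (log_pos hx).ne' (n + 2)
  have hint : IntegrableOn (fun x => f x - φ x) (Ioi a) :=
    integrableOn_Ioi_of_isBigO_inv_mul_log_pow (hf.sub hφ) hO
  refine ⟨(∫ t in Ioi a, (f t - φ t)) - logSeriesPrimitive c n a,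
    (integral_Ioi_isBigO_one_div_log_pow hO).neg_left.congr' ?_ EventuallyEq.rfl⟩
  filter_upwards [eventually_ge_atTop a] with x hx
  have hinterval : ∀ {g : ℝ → ℝ}, LocallyIntegrableOn g (Ici a) → IntervalIntegrable g volume a x :=
    fun hg => (hg.integrableOn_compact_subset (uIcc_of_le hx ▸ Icc_subset_Ici_self)
      isCompact_uIcc).intervalIntegrable
  rw [← intervalIntegral.integral_interval_add_Ioi hint (hint.mono_set (Ioi_subset_Ioi hx)),
    intervalIntegral.integral_sub (hinterval hf) (hinterval hφ),
    integral_log_div_mul_eval_inv_log c n ha (ha.trans_le hx)]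
  ring

theorem exists_forall_integral_sub_isBigO (ha : 1 < a) (hf : LocallyIntegrableOn f (Ici a))
    (hc : HasAsymptoticExpansion (fun x => x / log x * f x) (fun x => (log x)⁻¹) atTop c) :
    ∃ A, ∀ n : ℕ, (fun x => (∫ t in a..x, f t) - logSeriesPrimitive c n x - A)
      =O[atTop] fun x => 1 / log x ^ (n + 1) := by
  refine exists_forall_sub_const_isBigO (fun n => ?_)
    (exists_integral_sub_isBigO ha hf hc) fun m n => ?_
  · simpa using tendsto_inv_log_atTop.pow (n + 1)
  · simpa using tendsto_logSeriesPrimitive_sub c n m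

end IntegratedExpansion

section ReciprocalSeries

variable {k : ℕ → ℝ}

/-- The series `1 - X - ∑_{j ≥ 1} k_j X^{j+1}` of the expansion of `x / (log x * li x)` in powers of
`1 / log x`, when `k` satisfies the recurrence; `k 0` does not enter. -/
noncomputable def reciprocalSeries (k : ℕ → ℝ) : ℝ⟦X⟧ :=
  1 - PowerSeries.X - PowerSeries.X ^ 2 * PowerSeries.mk fun j => k (j + 1)

theorem coeff_zero_reciprocalSeries : (reciprocalSeries k).coeff 0 = 1 := by
  simp [reciprocalSeries]

theorem coeff_one_reciprocalSeries : (reciprocalSeries k).coeff 1 = -1 := by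
  simp [reciprocalSeries, PowerSeries.coeff_X_pow_mul']

theorem coeff_add_two_reciprocalSeries (j : ℕ) :
    (reciprocalSeries k).coeff (j + 2) = -k (j + 1) := by
  simp [reciprocalSeries, PowerSeries.coeff_X_pow_mul', PowerSeries.coeff_X, PowerSeries.coeff_one]

theorem mk_factorial_mul_reciprocalSeries
    (hk : ∀ j : ℕ, 1 ≤ j →
      ∑ i ∈ Finset.range j, (Nat.factorial i : ℝ) * k (j - i) = j * Nat.factorial j) :
    (PowerSeries.mk fun i => (i.factorial : ℝ)) * reciprocalSeries k = 1 := by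
  set F : ℝ⟦X⟧ := PowerSeries.mk fun i => (i.factorial : ℝ)
  set K : ℝ⟦X⟧ := PowerSeries.mk fun j => k (j + 1)
  have hFK : ∀ j, (F * K).coeff j = (j + 1) * (j + 1).factorial := by
    intro j
    rw [PowerSeries.coeff_mul,
      Finset.Nat.sum_antidiagonal_eq_sum_range_succ fun i j => F.coeff i * K.coeff j]
    refine Eq.trans (Finset.sum_congr rfl fun i hi => ?_) ((hk (j + 1) (by lia)).trans (by simp))
    rw [PowerSeries.coeff_mk, PowerSeries.coeff_mk,
      Nat.sub_add_comm (Nat.lt_succ_iff.1 (Finset.mem_range.1 hi))]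
  have hexpand : F * reciprocalSeries k = F - PowerSeries.X * F - PowerSeries.X ^ 2 * (F * K) := by
    rw [reciprocalSeries]
    ring
  rw [hexpand]
  ext n
  match n with
  | 0 => simp [F]
  | 1 => simp [F, PowerSeries.coeff_X_pow_mul', PowerSeries.coeff_one, PowerSeries.coeff_succ_X_mul]
  | j + 2 =>
    rw [map_sub, map_sub, PowerSeries.coeff_succ_X_mul, PowerSeries.coeff_X_pow_mul, hFK]
    simp only [F, PowerSeries.coeff_mk, Nat.factorial_succ, Nat.cast_mul, Nat.cast_succ,
      PowerSeries.coeff_one, Nat.succ_ne_zero, if_false]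
    ring

end ReciprocalSeries

section PrimeNumberTheoremError

theorem exp_neg_mul_isBigO_of_log_isLittleO {α : Type*} {l : Filter α} {u δ : α → ℝ} {C : ℝ}
    (hC : 0 < C) (hu : Tendsto u l atTop) (hδ : ∀ᶠ x in l, 0 ≤ δ x)
    (h : (fun x => log (u x)) =o[l] δ) (N : ℕ) :
    (fun x => rexp (-C * δ x)) =O[l] fun x => 1 / u x ^ N := by
  refine IsBigO.of_bound 1 ?_
  filter_upwards [(h.const_mul_left (N : ℝ)).bound hC, hu.eventually_gt_atTop 0, hδ]
    with x hx hux hδx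
  have hlog : N * log (u x) ≤ C * δ x := by
    rw [Real.norm_of_nonneg hδx] at hx
    exact (le_abs_self _).trans hx
  have hpow : 1 / u x ^ N = rexp (-(N * log (u x))) := by
    rw [exp_neg, exp_nat_mul, exp_log hux, one_div]
  rw [hpow, one_mul, Real.norm_of_nonneg (exp_pos _).le, Real.norm_of_nonneg (exp_pos _).le,
    exp_le_exp, neg_mul]
  exact neg_le_neg hlog

theorem log_log_isLittleO_pntDelta : (fun x => log (log x)) =o[atTop] pntDelta := by
  have h : (fun y : ℝ => log y) =o[atTop] fun y => y ^ (3 / 5 : ℝ) * log y ^ (-1 / 5 : ℝ) := by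
    refine ((isLittleO_log_rpow_rpow_atTop (6 / 5) (show (0 : ℝ) < 3 / 5 by norm_num)).mul_isBigO
      (isBigO_refl (fun y : ℝ => log y ^ (-1 / 5 : ℝ)) atTop)).congr' ?_ EventuallyEq.rfl
    filter_upwards [eventually_gt_atTop 1] with y hy
    rw [← rpow_add (log_pos hy)]
    norm_num
  exact h.comp_tendsto tendsto_log_atTop

theorem eventually_pntDelta_nonneg : ∀ᶠ x in atTop, 0 ≤ pntDelta x := by
  filter_upwards [tendsto_log_atTop.eventually_ge_atTop 1] with x hx
  exact mul_nonneg (rpow_nonneg (zero_le_one.trans hx) _) (rpow_nonneg (log_nonneg hx) _)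

theorem mul_exp_neg_mul_pntDelta_isBigO {C : ℝ} (hC : 0 < C) (N : ℕ) :
    (fun x => x * rexp (-C * pntDelta x)) =O[atTop] fun x => x / log x ^ N :=
  ((isBigO_refl (fun x : ℝ => x) atTop).mul (exp_neg_mul_isBigO_of_log_isLittleO hC
    tendsto_log_atTop eventually_pntDelta_nonneg log_log_isLittleO_pntDelta N)).congr_right
    fun _ => mul_one_div _ _

end PrimeNumberTheoremError

theorem logSeriesPrimitive_reciprocalSeries {k : ℕ → ℝ} (hk1 : k 1 = 1) (n : ℕ) (x : ℝ) :
    logSeriesPrimitive (reciprocalSeries k) n x =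
      (1 / 2) * log x ^ 2 - log x - log (log x) +
        ∑ j ∈ Finset.Icc 2 (n + 1), k j / (((j : ℝ) - 1) * log x ^ (j - 1)) := by
  have hreindex : ∑ j ∈ Finset.Icc 2 (n + 1), k j / (((j : ℝ) - 1) * log x ^ (j - 1)) =
      ∑ i ∈ Finset.range n, k (i + 2) / ((i + 1) * log x ^ (i + 1)) := by
    rw [← Finset.Ico_add_one_right_eq_Icc, Finset.sum_Ico_eq_sum_range]
    refine Finset.sum_congr (by simp) fun i _ => ?_
    rw [add_comm 2 i, show i + 2 - 1 = i + 1 from rfl]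
    push_cast
    ring
  rw [hreindex, logSeriesPrimitive]
  simp only [coeff_zero_reciprocalSeries, coeff_one_reciprocalSeries,
    coeff_add_two_reciprocalSeries, hk1, neg_div, Finset.sum_neg_distrib]
  ring

-- Only finitely many `a n` vanish, so the value of `1 / 0` affects nothing but `A`.
theorem main_theorem_general (a : ℕ → ℝ)
    (ha : ∀ N : ℕ, (fun x : ℝ => a ⌊x⌋₊ - li x) =O[atTop] fun x => x / log x ^ N)
    (k : ℕ → ℝ)
    (hk : ∀ j : ℕ, 1 ≤ j →
      ∑ i ∈ Finset.range j, (Nat.factorial i : ℝ) * k (j - i) = j * Nat.factorial j) :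
    ∃ A : ℝ, ∀ m : ℕ, 1 ≤ m →
      (fun x : ℝ => (∑ n ∈ Finset.Icc 2 ⌊x⌋₊, 1 / a n) -
          ((1 / 2) * log x ^ 2 - log x - log (log x) + A +
            ∑ j ∈ Finset.Icc 2 m, k j / (((j : ℝ) - 1) * log x ^ (j - 1))))
        =O[atTop] (fun x : ℝ => 1 / log x ^ m) := by
  have hexp : HasAsymptoticExpansion (fun x => x / log x * (1 / a ⌊x⌋₊)) (fun x => (log x)⁻¹)
      atTop (reciprocalSeries k) := by
    simpa only [mul_inv, inv_div, one_div] using (hasAsymptoticExpansion_of_sub_li_isBigO ha).inv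
      tendsto_inv_log_atTop (mk_factorial_mul_reciprocalSeries hk)
  obtain ⟨A, hA⟩ := exists_forall_integral_sub_isBigO one_lt_two
    ((locallyIntegrable_comp_floor fun n => 1 / a n).locallyIntegrableOn _) hexp
  have hsmall : (fun x : ℝ => 1 / a ⌊x⌋₊) =O[atTop] fun x => log x / x := by
    simpa using hexp.sub_log_div_mul_eval_isBigO 0
  refine ⟨A, fun m hm => ?_⟩
  obtain ⟨n, rfl⟩ := Nat.exists_eq_add_of_le' hm
  refine (((sum_Icc_floor_sub_integral_isBigO (fun n => 1 / a n) 2).trans (hsmall.trans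
    (isBigO_log_div_one_div_log_pow (n + 1)))).add (hA n)).congr_left fun x => ?_
  rw [logSeriesPrimitive_reciprocalSeries (by simpa using hk 1 le_rfl), Nat.cast_ofNat]
  ring

theorem main_theorem (C : ℝ) (hC : 0 < C)
    (hR : (fun x : ℝ => primePi x - li x)
      =O[atTop] (fun x : ℝ => x * Real.exp (-C * pntDelta x)))
    (k : ℕ → ℝ)
    (hk : ∀ j : ℕ, 1 ≤ j →
      ∑ i ∈ Finset.range j, (Nat.factorial i : ℝ) * k (j - i) =
        j * Nat.factorial j) :
    ∃ A : ℝ, ∀ m : ℕ, 2 ≤ m →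
      (fun x : ℝ => (∑ n ∈ Finset.Icc 2 ⌊x⌋₊, 1 / (Nat.primeCounting n : ℝ)) -
          ((1 / 2) * (Real.log x) ^ 2 - Real.log x - Real.log (Real.log x) + A +
            ∑ j ∈ Finset.Icc 2 m, k j / (((j : ℝ) - 1) * (Real.log x) ^ (j - 1))))
        =O[atTop] (fun x : ℝ => 1 / (Real.log x) ^ m) :=
  (main_theorem_general (fun n => Nat.primeCounting n)
    (fun N => hR.trans (mul_exp_neg_mul_pntDelta_isBigO hC N)) k hk).imp
    fun _ hA m hm => hA m (one_le_two.trans hm)
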